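/- The sequence of real numbers {r̃_n} satisfies the difference equation n^3(n+1)^3 b̃0(n−1) r̃_{n+1} − 2n b̃1(n) r̃_n − b̃2(n) r̃_{n−1} + 2n(n−1)^4 (2n−3) b̃0(n) r̃_{n−2} = 0 for every integer n ≥ 2. -/

import Mathlib

noncomputable section

open Filter


def bt0r (x : ℝ) : ℝ := 41218*x^7 + 35648*x^6 - 932*x^5 - 13190*x^4 - 5128*x^3
  + 811*x^2 + 957*x + 174

def bt1r (x : ℝ) : ℝ := 3874492*x^12 - 14084302*x^11 + 12425954*x^10 + 8641603*x^9
  - 15230839*x^8 - 1369195*x^7 + 8618417*x^6 - 623249*x^5 - 2785973*x^4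
  + 308165*x^3 + 495325*x^2 - 40670*x - 37632

def bt2r (x : ℝ) : ℝ := 2*(48802112*x^13 - 201803328*x^12 + 267014032*x^11 - 69927236*x^10
  - 95912858*x^9 + 37524471*x^8 + 30257812*x^7 - 9523224*x^6 - 8524312*x^5
  + 2138687*x^4 + 1507490*x^3 - 398634*x^2 - 111012*x + 33408)

/-- The very-well-poised hypergeometric series `r̃_n`
(the summation index `k ≥ 1` is written as `k + 1` with `k : ℕ`). -/
def rt (n : ℕ) : ℝ := -(Nat.factorial n : ℝ)^4 * ∑' k : ℕ,
  (((k : ℝ) + 1) + (n : ℝ)/2)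
    * (∏ j ∈ Finset.range (n+1), (((k : ℝ) + 1) - (j : ℝ)))
    * (∏ j ∈ Finset.range (n+1), (((k : ℝ) + 1) + (n : ℝ) + (j : ℝ)))
    / (∏ j ∈ Finset.range (n+1), (((k : ℝ) + 1) + (j : ℝ))^6)

/-!
Creative telescoping. The summands of `r̃_n` are hypergeometric in `n` and in the summation index
`k`, so four consecutive ones have rational ratios, and the Gosper–Zeilberger algorithm writes the
combination of them that corresponds to the difference equation as `G (k + 1) - G k`, where `G` is
a rational multiple of the summand. After division by a common factor this is an identity between
polynomials. Since `G 1 = 0`, because a factor `k - j` vanishes there, and `G k → 0`, by comparison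
of degrees, summing over `k ≥ 1` gives zero.
-/

open Polynomial Topology Asymptotics

lemma tsum_eq_of_telescoping {E : Type*} [AddCommGroup E] [TopologicalSpace E]
    [T2Space E] {f g : ℕ → E} {l : E} (hf : Summable f)
    (hfg : ∀ k, f k = g (k + 1) - g k) (hg : Tendsto (fun k ↦ g k - g 0) atTop (𝓝 l)) :
    ∑' k, f k = l := by
  refine tendsto_nhds_unique hf.hasSum.tendsto_sum_nat (hg.congr fun N ↦ ?_)
  rw [← Finset.sum_range_sub, Finset.sum_congr rfl fun k _ ↦ hfg k]

lemma summable_eval_div_eval {P Q : ℝ[X]} (h : P.natDegree + 2 ≤ Q.natDegree) :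
    Summable fun k : ℕ ↦ P.eval (k : ℝ) / Q.eval (k : ℝ) := by
  have hQ : Q ≠ 0 := ne_zero_of_natDegree_gt (n := 1) (by lia)
  have hdeg : (P * X ^ 2).degree ≤ Q.degree := by
    rw [degree_eq_natDegree hQ]
    exact degree_le_of_natDegree_le ((natDegree_mul_le.trans (by simp)).trans h)
  have hO : (fun x : ℝ ↦ P.eval x / Q.eval x) =O[atTop] fun x ↦ (x ^ 2)⁻¹ := by
    refine ((isBigO_atTop_of_degree_le (P * X ^ 2) Q hdeg).mul
      (isBigO_refl (fun x ↦ (Q.eval x * x ^ 2)⁻¹) atTop)).congr' ?_ ?_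
    · filter_upwards [eventually_ne_atTop 0] with x hx
      rw [eval_mul, eval_pow, eval_X]
      field_simp
    · filter_upwards [eventually_atTop_not_isRoot Q hQ] with x hx
      have hx : Q.eval x ≠ 0 := hx
      field_simp
  refine summable_of_isBigO_nat (Real.summable_nat_pow_inv.2 one_lt_two) ?_
  exact hO.comp_tendsto tendsto_natCast_atTop_atTop

section Pochhammer

lemma ascPochhammer_eval_add_one_mul {S : Type*} [CommSemiring S] (n : ℕ) (x : S) :
    (ascPochhammer S n).eval (x + 1) * x = (ascPochhammer S n).eval x * (x + n) := by
  rw [← ascPochhammer_succ_eval, ascPochhammer_succ_left]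
  simp [mul_comm]

lemma descPochhammer_eval_add_one_mul {R : Type*} [CommRing R] (n : ℕ) (x : R) :
    (descPochhammer R n).eval (x + 1) * (x + 1 - n) = (descPochhammer R n).eval x * (x + 1) := by
  rw [← descPochhammer_succ_eval, descPochhammer_succ_left]
  simp [mul_comm]

lemma ascPochhammer_eval_eq_prod_range {S : Type*} [CommSemiring S] (n : ℕ) (x : S) :
    (ascPochhammer S n).eval x = ∏ j ∈ Finset.range n, (x + j) := by
  induction n with
  | zero => simp
  | succ n ih => rw [ascPochhammer_succ_eval, ih, Finset.prod_range_succ]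

end Pochhammer

/-- The numerator `(∏ j ≤ n, (x - j)) * ∏ j ≤ n, (x + n + j)` of `kernel n x`. -/
def kernelNum (n : ℕ) : ℝ[X] :=
  descPochhammer ℝ (n + 1) * (ascPochhammer ℝ (n + 1)).comp (X + C (n : ℝ))

/-- The denominator `∏ j ≤ n, (x + j) ^ 6` of `kernel n x`. -/
def kernelDenom (n : ℕ) : ℝ[X] := ascPochhammer ℝ (n + 1) ^ 6

/-- The summand of `r̃_n` at a real argument `x`, without its well-poised factor `x + n / 2`; it is
hypergeometric in both `n` and `x`. -/
def kernel (n : ℕ) (x : ℝ) : ℝ := (kernelNum n).eval x / (kernelDenom n).eval x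

/-- The summand of `r̃_n`, with the summation index extended to a real argument `x`. -/
def summand (n : ℕ) (x : ℝ) : ℝ := (x + n / 2) * kernel n x

lemma natDegree_kernelNum (n : ℕ) : (kernelNum n).natDegree = 2 * (n + 1) := by
  have hasc : ((ascPochhammer ℝ (n + 1)).comp (X + C (n : ℝ))).Monic :=
    (monic_ascPochhammer ℝ _).comp_X_add_C _
  rw [kernelNum, (monic_descPochhammer ℝ _).natDegree_mul hasc, natDegree_comp,
    ascPochhammer_natDegree, descPochhammer_natDegree, natDegree_X_add_C]
  ring

lemma natDegree_kernelDenom (n : ℕ) : (kernelDenom n).natDegree = 6 * (n + 1) := by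
  rw [kernelDenom, natDegree_pow, ascPochhammer_natDegree]

lemma kernel_eq (n : ℕ) (x : ℝ) :
    kernel n x = (descPochhammer ℝ (n + 1)).eval x * (ascPochhammer ℝ (n + 1)).eval (x + n)
      / (ascPochhammer ℝ (n + 1)).eval x ^ 6 := by
  simp [kernel, kernelNum, kernelDenom]

lemma kernel_succ (n : ℕ) {x : ℝ} (hx : 0 < x) :
    kernel (n + 1) x = kernel n x * ((x - n - 1) * (x + 2 * n + 1) * (x + 2 * n + 2)
      / ((x + n) * (x + n + 1) ^ 6)) := by
  have hpos := ascPochhammer_pos (n + 1) x hx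
  have hn : 0 < x + n := by positivity
  have hshift := ascPochhammer_eval_add_one_mul (n + 1) (x + n)
  rw [kernel_eq, kernel_eq, descPochhammer_succ_eval (n + 1), ascPochhammer_succ_eval (n + 1),
    ascPochhammer_succ_eval (n + 1), Nat.cast_succ, ← add_assoc, eq_div_of_mul_eq hn.ne' hshift]
  push_cast
  field_simp
  ring

lemma kernel_add_two (n : ℕ) {x : ℝ} (hx : 0 < x) :
    kernel (n + 2) x = kernel n x * ((x - n - 1) * (x - n - 2)
      * ((x + 2 * n + 1) * (x + 2 * n + 2) * (x + 2 * n + 3) * (x + 2 * n + 4))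
      / ((x + n) * (x + n + 1) ^ 7 * (x + n + 2) ^ 6)) := by
  have h : kernel (n + 2) x = kernel (n + 1) x * ((x - n - 2) * (x + 2 * n + 3) * (x + 2 * n + 4)
      / ((x + n + 1) * (x + n + 2) ^ 6)) := by
    convert kernel_succ (n + 1) hx using 3 <;> push_cast <;> ring
  rw [h, kernel_succ n hx]
  field_simp

lemma kernel_add_three (n : ℕ) {x : ℝ} (hx : 0 < x) :
    kernel (n + 3) x = kernel n x * ((x - n - 1) * (x - n - 2) * (x - n - 3)
      * ((x + 2 * n + 1) * (x + 2 * n + 2) * (x + 2 * n + 3) * (x + 2 * n + 4)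
        * (x + 2 * n + 5) * (x + 2 * n + 6))
      / ((x + n) * (x + n + 1) ^ 7 * (x + n + 2) ^ 7 * (x + n + 3) ^ 6)) := by
  have h : kernel (n + 3) x = kernel (n + 2) x * ((x - n - 3) * (x + 2 * n + 5) * (x + 2 * n + 6)
      / ((x + n + 2) * (x + n + 3) ^ 6)) := by
    convert kernel_succ (n + 2) hx using 3 <;> push_cast <;> ring
  rw [h, kernel_add_two n hx]
  field_simp

lemma kernel_apply_add_one (n : ℕ) {x : ℝ} (hx : 0 < x) :
    kernel n (x + 1) * (x - n) = kernel n x * ((x + 1) * (x + 2 * n + 1) * x ^ 6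
      / ((x + n) * (x + n + 1) ^ 6)) := by
  have hpos := ascPochhammer_pos (n + 1) x hx
  have hn : 0 < x + n := by positivity
  have hasc := ascPochhammer_eval_add_one_mul (n + 1) x
  have hasc' := ascPochhammer_eval_add_one_mul (n + 1) (x + n)
  have hdesc : (descPochhammer ℝ (n + 1)).eval (x + 1) * (x - n) =
      (descPochhammer ℝ (n + 1)).eval x * (x + 1) := by
    simpa [add_sub_add_right_eq_sub] using descPochhammer_eval_add_one_mul (n + 1) x
  rw [kernel_eq, kernel_eq, add_right_comm x 1, eq_div_of_mul_eq hx.ne' hasc,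
    eq_div_of_mul_eq hn.ne' hasc', div_mul_eq_mul_div, mul_right_comm, hdesc]
  push_cast
  field_simp
  ring

lemma summable_summand (n : ℕ) : Summable fun k : ℕ ↦ summand n ((k : ℝ) + 1) := by
  have hdeg : ((X + C ((n : ℝ) / 2)) * kernelNum n).natDegree + 2 ≤ (kernelDenom n).natDegree := by
    have hmul := natDegree_mul_le (p := X + C ((n : ℝ) / 2)) (q := kernelNum n)
    rw [natDegree_X_add_C, natDegree_kernelNum] at hmul
    rw [natDegree_kernelDenom]
    lia
  refine ((summable_nat_add_iff 1).2 (summable_eval_div_eval hdeg)).congr fun k ↦ ?_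
  simp [summand, kernel, mul_div_assoc]

/-- The coefficients, in ascending order, of `certificate n`. -/
def certificateCoeff (n : ℝ) : Fin 16 → ℝ :=
  ![-4*n^8*(2*n^8 - 3*n^7 - 16*n^6 + 5*n^5 + 44*n^4 + 23*n^3 - 24*n^2 - 25*n - 6) * bt0r (n - 1),
    -2*n^7*(34*n^8 - 44*n^7 - 209*n^6 + 45*n^5 + 398*n^4 + 190*n^3 - 109*n^2 - 95*n - 18)
      * bt0r (n - 1),
    -n^6*(278*n^8 - 351*n^7 - 1221*n^6 + 330*n^5 + 1556*n^4 + 549*n^3 - 221*n^2 - 160*n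
      - 24) * bt0r (n - 1),
    -n^5*(735*n^8 - 1009*n^7 - 2053*n^6 + 850*n^5 + 1749*n^4 + 515*n^3 - 191*n^2 - 140*n
      - 24) * bt0r (n - 1),
    -4*n^4*(351*n^8 - 533*n^7 - 520*n^6 + 248*n^5 + 419*n^4 + 122*n^3 - 46*n^2 - 35*n - 6)
      * bt0r (n - 1),
    -n^3*(1959*n^8 - 2758*n^7 - 2268*n^6 + 1064*n^5 + 1659*n^4 + 468*n^3 - 184*n^2 - 140*n
      - 24) * bt0r (n - 1),
    -(66278544*n^17 - 399167366*n^16 + 738130504*n^15 + 296647024*n^14 - 3161152466*n^13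
      + 4946044894*n^12 - 2975188673*n^11 - 339319960*n^10 + 1150336313*n^9 - 64684474*n^8
      - 343570516*n^7 + 11143508*n^6 + 95578352*n^5 - 7409664*n^4 - 17245296*n^3 + 3331296*n^2
      + 1269504*n - 400896),
    14220210*n^16 - 402519392*n^15 + 2616044482*n^14 - 7852174412*n^13 + 12506848324*n^12
      - 9693782483*n^11 + 872637304*n^10 + 3491340344*n^9 - 925010903*n^8 - 1070052678*n^7
      + 236693572*n^6 + 307125232*n^5 - 62263728*n^4 - 55128850*n^3 + 15160596*n^2 + 3943536*n
      - 1536768,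
    127446056*n^15 - 1333642924*n^14 + 5600061464*n^13 - 11884537346*n^12 + 12356416052*n^11
      - 3321328786*n^10 - 4058846376*n^9 + 1981442902*n^8 + 1283540437*n^7 - 526882420*n^6
      - 379539518*n^5 + 122430346*n^4 + 66286009*n^3 - 24361980*n^2 - 4419948*n + 2271744,
    185851962*n^14 - 1555951650*n^13 + 4991035996*n^12 - 7131494010*n^11 + 3201798388*n^10
      + 2120654383*n^9 - 1658475763*n^8 - 727505493*n^7 + 434103208*n^6 + 223061765*n^5
      - 91948219*n^4 - 36108152*n^3 + 16913217*n^2 + 1956282*n - 1603584,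
    141789920*n^13 - 885233416*n^12 + 1832681516*n^11 - 1179374114*n^10 - 519877184*n^9
      + 599643240*n^8 + 238278366*n^7 - 134402624*n^6 - 72606911*n^5 + 20684350*n^4 + 8437235*n^3
      - 4047414*n^2 + 13224*n + 534528,
    46493904*n^12 - 159943664*n^11 + 127263680*n^10 + 82084618*n^9 - 87638442*n^8 - 77038188*n^7
      - 92670*n^6 + 20900924*n^5 + 7139929*n^4 - 565105*n^3 - 887748*n^2 - 342780*n - 66816,
    -4*n*(7*n^3 - 55*n^2 + 167*n - 216) * bt0r n,
    -n*(14*n^2 - 94*n + 207) * bt0r n,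
    -6*n*(n - 5) * bt0r n,
    -2*n * bt0r n]

/-- The polynomial part of the rational certificate produced by the Gosper–Zeilberger algorithm for
the difference equation at index `n`; its variable is `z = k + n`, with `k` the summation index. -/
def certificate (n : ℝ) : ℝ[X] := ∑ i : Fin 16, C (certificateCoeff n i) * X ^ (i : ℕ)

lemma natDegree_certificate_le (n : ℝ) : (certificate n).natDegree ≤ 15 :=
  natDegree_sum_le_of_forall_le _ _ fun i _ ↦ (natDegree_C_mul_X_pow_le _ _).trans (by lia)

lemma eval_certificate (n z : ℝ) :
    (certificate n).eval z = ∑ i : Fin 16, certificateCoeff n i * z ^ (i : ℕ) := by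
  simp only [certificate, eval_finsetSum, eval_mul, eval_C, eval_pow, eval_X]

lemma certificate_identity (m x : ℝ) :
    4 * (m + 2) * (2 * m + 1) * bt0r (m + 2)
        * ((x + m / 2) * ((x + m) * (x + m + 1) ^ 7 * (x + m + 2) ^ 7 * (x + m + 3) ^ 6))
      - 2 * bt2r (m + 2)
        * ((x + (m + 1) / 2) * ((x - m - 1) * ((x + 2 * m + 1) * (x + 2 * m + 2))
          * ((x + m + 1) * (x + m + 2) ^ 7 * (x + m + 3) ^ 6)))
      - 4 * (m + 2) ^ 5 * bt1r (m + 2)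
        * ((x + (m + 2) / 2) * ((x - m - 1) * (x - m - 2)
          * ((x + 2 * m + 1) * (x + 2 * m + 2) * (x + 2 * m + 3) * (x + 2 * m + 4))
          * ((x + m + 2) * (x + m + 3) ^ 6)))
      + 2 * (m + 2) ^ 7 * (m + 3) ^ 7 * bt0r (m + 1)
        * ((x + (m + 3) / 2) * ((x - m - 1) * (x - m - 2) * (x - m - 3)
          * ((x + 2 * m + 1) * (x + 2 * m + 2) * (x + 2 * m + 3) * (x + 2 * m + 4)
            * (x + 2 * m + 5) * (x + 2 * m + 6))))
    = (x + 1) * (x + 2 * m + 1) * x ^ 6 * (certificate (m + 2)).eval (x + m + 3)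
      - (x - m - 1) * (x + m + 2) * (x + m + 3) ^ 6 * (certificate (m + 2)).eval (x + m + 2) := by
  -- In terms of `n = m + 2` and `z = x + m + 2` the expansion has far fewer terms.
  obtain ⟨n, rfl⟩ : ∃ n, m = n - 2 := ⟨m + 2, by ring⟩
  obtain ⟨z, rfl⟩ : ∃ z, x = z - n := ⟨x + n, by ring⟩
  simp only [eval_certificate, Fin.sum_univ_ofNat, certificateCoeff, Matrix.cons_val,
    Fin.coe_ofNat_eq_mod, Nat.reduceMod, bt0r, bt1r, bt2r]
  ring

/-- The Gosper–Zeilberger antidifference for the difference equation at index `n = m + 2`: the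
difference equation holds for the summands up to the forward difference of `antidifference m`. -/
def antidifference (m : ℕ) (x : ℝ) : ℝ :=
  (x - m - 1) * (certificate (m + 2)).eval (x + m + 2) * kernel m x
    / ((x + m) * (x + m + 1) ^ 7 * (x + m + 2) ^ 6)

lemma tendsto_antidifference (m : ℕ) : Tendsto (antidifference m) atTop (𝓝 0) := by
  set P : ℝ[X] := (X - C ((m : ℝ) + 1)) * (certificate (m + 2)).comp (X + C ((m : ℝ) + 2)) *
    kernelNum m with hP
  set Q : ℝ[X] := (X + C (m : ℝ)) * (X + C ((m : ℝ) + 1)) ^ 7 * (X + C ((m : ℝ) + 2)) ^ 6 *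
    kernelDenom m with hQ
  have hPdeg : P.natDegree ≤ 16 + 2 * (m + 1) := by
    refine natDegree_mul_le_of_le (natDegree_mul_le_of_le (m := 1) (n := 15)
      (natDegree_X_sub_C_le _) ?_) (natDegree_kernelNum m).le
    rw [natDegree_comp, natDegree_X_add_C, mul_one]
    exact natDegree_certificate_le _
  have hQdeg : Q.natDegree = 14 + 6 * (m + 1) := by
    have hmonic₀ : (X + C (m : ℝ)).Monic := monic_X_add_C _
    have hmonic₁ : ((X + C ((m : ℝ) + 1)) ^ 7).Monic := (monic_X_add_C _).pow 7
    have hmonic₂ : ((X + C ((m : ℝ) + 2)) ^ 6).Monic := (monic_X_add_C _).pow 6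
    have hmonic₃ : (kernelDenom m).Monic := (monic_ascPochhammer ℝ _).pow 6
    rw [hQ, ((hmonic₀.mul hmonic₁).mul hmonic₂).natDegree_mul hmonic₃,
      (hmonic₀.mul hmonic₁).natDegree_mul hmonic₂, hmonic₀.natDegree_mul hmonic₁, natDegree_pow,
      natDegree_pow, natDegree_X_add_C, natDegree_X_add_C, natDegree_X_add_C,
      natDegree_kernelDenom]
  have hdeg : P.degree < Q.degree := degree_lt_degree (by lia)
  refine (div_tendsto_atTop_zero_of_degree_lt P Q hdeg).congr fun x ↦ ?_
  simp only [hP, hQ, antidifference, kernel, eval_mul, eval_sub, eval_add, eval_pow, eval_comp,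
    eval_X, eval_C, sub_sub, add_assoc, mul_div_assoc', div_div,
    mul_comm ((kernelDenom m).eval x)]

lemma antidifference_apply_one (m : ℕ) : antidifference m 1 = 0 := by
  cases m with
  | zero => simp [antidifference]
  | succ m =>
    have h : (descPochhammer ℝ (m + 2)).eval 1 = 0 :=
      mod_cast descPochhammer_eval_coe_nat_of_lt (R := ℝ) (show 1 < m + 2 by lia)
    simp [antidifference, kernel_eq, h]

lemma antidifference_apply_add_one (m : ℕ) {x : ℝ} (hx : 0 < x) :
    antidifference m (x + 1) = kernel m x * ((x + 1) * (x + 2 * m + 1) * x ^ 6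
      * (certificate (m + 2)).eval (x + m + 3)
      / ((x + m) * (x + m + 1) ^ 7 * (x + m + 2) ^ 7 * (x + m + 3) ^ 6)) := by
  rw [antidifference, show x + 1 - m - 1 = x - m by ring, mul_right_comm, mul_comm (x - m),
    kernel_apply_add_one m hx, show x + 1 + m = x + m + 1 by ring,
    show x + m + 1 + 1 = x + m + 2 by ring, show x + m + 1 + 2 = x + m + 3 by ring]
  field_simp

-- The coefficients are `-2 / (m + 1)! ^ 4` times those of the difference equation at `n = m + 2`,
-- with the prefactors `-n! ^ 4` of `r̃_n` absorbed into them.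
lemma summand_telescoping (m : ℕ) {x : ℝ} (hx : 0 < x) :
    4 * (m + 2) * (2 * m + 1) * bt0r (m + 2) * summand m x
      - 2 * bt2r (m + 2) * summand (m + 1) x
      - 4 * (m + 2) ^ 5 * bt1r (m + 2) * summand (m + 2) x
      + 2 * (m + 2) ^ 7 * (m + 3) ^ 7 * bt0r (m + 1) * summand (m + 3) x
    = antidifference m (x + 1) - antidifference m x := by
  obtain ⟨H, hH⟩ : ∃ H,
      kernel m x = H * ((x + m) * (x + m + 1) ^ 7 * (x + m + 2) ^ 7 * (x + m + 3) ^ 6) :=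
    ⟨_, (div_mul_cancel₀ _ (by positivity)).symm⟩
  have hkernel₁ : kernel (m + 1) x = H * ((x - m - 1) * ((x + 2 * m + 1) * (x + 2 * m + 2))
      * ((x + m + 1) * (x + m + 2) ^ 7 * (x + m + 3) ^ 6)) := by
    rw [kernel_succ m hx, hH]
    field_simp
  have hkernel₂ : kernel (m + 2) x = H * ((x - m - 1) * (x - m - 2)
      * ((x + 2 * m + 1) * (x + 2 * m + 2) * (x + 2 * m + 3) * (x + 2 * m + 4))
      * ((x + m + 2) * (x + m + 3) ^ 6)) := by
    rw [kernel_add_two m hx, hH]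
    field_simp
  have hkernel₃ : kernel (m + 3) x = H * ((x - m - 1) * (x - m - 2) * (x - m - 3)
      * ((x + 2 * m + 1) * (x + 2 * m + 2) * (x + 2 * m + 3) * (x + 2 * m + 4)
        * (x + 2 * m + 5) * (x + 2 * m + 6))) := by
    rw [kernel_add_three m hx, hH]
    field_simp
  have hanti : antidifference m x = H * ((x - m - 1) * (x + m + 2) * (x + m + 3) ^ 6
      * (certificate (m + 2)).eval (x + m + 2)) := by
    rw [antidifference, hH]
    field_simp
  have hanti' : antidifference m (x + 1) = H * ((x + 1) * (x + 2 * m + 1) * x ^ 6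
      * (certificate (m + 2)).eval (x + m + 3)) := by
    rw [antidifference_apply_add_one m hx, hH]
    field_simp
  rw [hanti, hanti', ← mul_sub, ← certificate_identity]
  simp only [summand, hH, hkernel₁, hkernel₂, hkernel₃, Nat.cast_add, Nat.cast_ofNat, Nat.cast_one,
    mul_left_comm _ H, ← mul_sub, ← mul_add]

lemma rt_eq_tsum (n : ℕ) :
    rt n = -(n.factorial : ℝ) ^ 4 * ∑' k : ℕ, summand n ((k : ℝ) + 1) := by
  simp only [rt, summand, kernel_eq, descPochhammer_eval_eq_prod_range,
    ascPochhammer_eval_eq_prod_range, Finset.prod_pow, mul_div_assoc, mul_assoc]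

lemma tsum_summand_recurrence (m : ℕ) :
    4 * (m + 2) * (2 * m + 1) * bt0r (m + 2) * ∑' k : ℕ, summand m ((k : ℝ) + 1)
      - 2 * bt2r (m + 2) * ∑' k : ℕ, summand (m + 1) ((k : ℝ) + 1)
      - 4 * (m + 2) ^ 5 * bt1r (m + 2) * ∑' k : ℕ, summand (m + 2) ((k : ℝ) + 1)
      + 2 * (m + 2) ^ 7 * (m + 3) ^ 7 * bt0r (m + 1) * ∑' k : ℕ, summand (m + 3) ((k : ℝ) + 1)
    = 0 := by
  have hsum := ((((summable_summand m).hasSum.mul_left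
        (4 * ((m : ℝ) + 2) * (2 * m + 1) * bt0r (m + 2))).sub
      ((summable_summand (m + 1)).hasSum.mul_left (2 * bt2r (m + 2)))).sub
      ((summable_summand (m + 2)).hasSum.mul_left (4 * ((m : ℝ) + 2) ^ 5 * bt1r (m + 2)))).add
      ((summable_summand (m + 3)).hasSum.mul_left
        (2 * ((m : ℝ) + 2) ^ 7 * (m + 3) ^ 7 * bt0r (m + 1)))
  have htel (k : ℕ) := summand_telescoping m (x := k + 1) (by positivity)
  have hlim : Tendsto (fun k : ℕ ↦ antidifference m (k + 1) - antidifference m ((0 : ℕ) + 1))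
      atTop (𝓝 0) := by
    rw [Nat.cast_zero, zero_add, antidifference_apply_one]
    simpa only [sub_zero, Function.comp_def] using (tendsto_antidifference m).comp
      (tendsto_atTop_add_const_right atTop 1 tendsto_natCast_atTop_atTop)
  rw [← hsum.tsum_eq]
  exact tsum_eq_of_telescoping hsum.summable (fun k ↦ mod_cast htel k) hlim

/-- The sequence `{r̃_n}` satisfies the difference equation (9) for every integer `n ≥ 2`. -/
theorem stmt10 :
    ∀ n : ℕ, 2 ≤ n →
      (n : ℝ)^3*((n : ℝ) + 1)^3 * bt0r ((n : ℝ) - 1) * rt (n+1) - 2*(n : ℝ)*bt1r (n : ℝ) * rt n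
        - bt2r (n : ℝ) * rt (n-1)
        + 2*(n : ℝ)*((n : ℝ) - 1)^4*(2*(n : ℝ) - 3) * bt0r (n : ℝ) * rt (n-2) = 0 := by
  intro n hn
  obtain ⟨m, rfl⟩ := Nat.exists_eq_add_of_le' hn
  have hrec := tsum_summand_recurrence m
  simp only [Nat.add_sub_cancel, show m + 2 - 1 = m + 1 from rfl, rt_eq_tsum, Nat.factorial_succ]
  push_cast
  rw [show (m : ℝ) + 2 - 1 = m + 1 by ring]
  linear_combination (-(m.factorial : ℝ) ^ 4 * (m + 1) ^ 4 / 2) * hrec
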